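/- Let d ≥ 1, let D be a real symmetric positive definite d×d matrix, let N ≥ 0, and for each t > 0 let p_t : ℤᵈ → [0,∞) satisfy ∑_{x} p_t(x) = N and ∑_{x} e^{λ‖x‖₁} p_t(x) < ∞ for every λ ≥ 0, so that M_t(z) = ∑_{x ∈ ℤᵈ} exp( i ∑_j z_j x_j ) p_t(x) defines an entire function of z ∈ ℂᵈ. Assume that for every compact K ⊂ ℂᵈ, sup_{z ∈ K} | M_t(z/√t) − N·exp( −(1/2) ∑_{i,j} D_{ij} z_i z_j ) | → 0 as t → ∞. Then for every continuous function f : ℝᵈ → ℝ that is polynomially bounded (i.e. |f(x)| ≤ C(1 + ‖x‖)^k for some C, k), one has lim_{t→∞} ∑_{x ∈ ℤᵈ} f(x/√t) p_t(x) = N · (2π)^{−d/2} (det D)^{−1/2} ∫_{ℝᵈ} f(x) exp( −(1/2) ⟨x, D⁻¹ x⟩ ) dx. -/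

import Mathlib

open MeasureTheory Filter

/-- The ℓ¹ norm `‖x‖₁ = ∑ i, |x i|` of `x ∈ ℤᵈ`. -/
def normOne {d : ℕ} (x : Fin d → ℤ) : ℝ := ∑ i, |(x i : ℝ)|

/-!
After dividing by `N`, the weights `p_t` placed at the points `x / √t` form probability measures
whose characteristic functions are the values of `M_t(z / √t) / N` at real `z`. By Lévy's continuity
theorem these measures converge weakly to the centred Gaussian with covariance matrix `D`.

Unbounded test functions are reached through the values of `M_t(z / √t) / N` at `z = -iσ e_j`, which
are the exponential moments of the `j`-th coordinate: they converge, hence stay bounded. They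
control the second moment of any `f` of at most exponential growth, so truncating `f` at height `R`
costs `O(1/R)` uniformly in `t`, and the truncated function is bounded and continuous.
-/

section WeakConvergence

lemma abs_sub_clamp_le {R : ℝ} (hR : 0 < R) (y : ℝ) : |y - max (-R) (min R y)| ≤ y ^ 2 / R := by
  rw [le_div_iff₀ hR]
  rcases le_total R y with hy | hy
  · rw [min_eq_left hy, max_eq_right (by linarith), abs_of_nonneg (by linarith)]
    nlinarith
  rw [min_eq_right hy]
  rcases le_total (-R) y with hy' | hy'
  · simpa [max_eq_right hy'] using sq_nonneg y
  · rw [max_eq_left hy', abs_of_nonpos (by linarith)]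
    nlinarith

lemma abs_clamp_le {R : ℝ} (hR : 0 ≤ R) (y : ℝ) : |max (-R) (min R y)| ≤ R :=
  abs_le.2 ⟨le_max_left _ _, max_le (by linarith) (min_le_left _ _)⟩

lemma abs_integral_sub_integral_clamp_le {Ω : Type*} [MeasurableSpace Ω] {ν : Measure Ω}
    [IsFiniteMeasure ν] {f : Ω → ℝ} (hf : MemLp f 2 ν) {R : ℝ} (hR : 0 < R) :
    |∫ x, f x ∂ν - ∫ x, max (-R) (min R (f x)) ∂ν| ≤ (∫ x, f x ^ 2 ∂ν) / R := by
  have hf_int : Integrable f ν := hf.integrable (by norm_num)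
  have hclamp_int : Integrable (fun x ↦ max (-R) (min R (f x))) ν :=
    (integrable_const (-R)).sup ((integrable_const R).inf hf_int)
  rw [← integral_sub hf_int hclamp_int, ← integral_div]
  exact abs_integral_le_integral_abs.trans <|
    integral_mono (hf_int.sub hclamp_int).abs (hf.integrable_sq.div_const R)
      fun x ↦ abs_sub_clamp_le hR (f x)

variable {Ω κ : Type*} [TopologicalSpace Ω] [MeasurableSpace Ω] [OpensMeasurableSpace Ω]
  {l : Filter κ} {μ : κ → ProbabilityMeasure Ω} {μ₀ : ProbabilityMeasure Ω}

lemma tendsto_integral_clamp (hμ : Tendsto μ l (nhds μ₀)) {f : Ω → ℝ} (hf : Continuous f)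
    {R : ℝ} (hR : 0 ≤ R) :
    Tendsto (fun i ↦ ∫ x, max (-R) (min R (f x)) ∂(μ i : Measure Ω)) l
      (nhds (∫ x, max (-R) (min R (f x)) ∂(μ₀ : Measure Ω))) :=
  ProbabilityMeasure.tendsto_iff_forall_integral_tendsto.1 hμ <|
    .ofNormedAddCommGroup (fun x ↦ max (-R) (min R (f x))) (by fun_prop) R
      fun x ↦ abs_clamp_le hR (f x)

theorem tendsto_integral_of_integral_sq_le (hμ : Tendsto μ l (nhds μ₀)) {f : Ω → ℝ}
    (hf : Continuous f) (hmem : ∀ᶠ i in l, MemLp f 2 (μ i : Measure Ω))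
    (hmem₀ : MemLp f 2 (μ₀ : Measure Ω)) {B : ℝ}
    (hB : ∀ᶠ i in l, ∫ x, f x ^ 2 ∂(μ i : Measure Ω) ≤ B) :
    Tendsto (fun i ↦ ∫ x, f x ∂(μ i : Measure Ω)) l (nhds (∫ x, f x ∂(μ₀ : Measure Ω))) := by
  refine Metric.tendsto_nhds.2 fun ε hε ↦ ?_
  set B' := max B (∫ x, f x ^ 2 ∂(μ₀ : Measure Ω))
  obtain ⟨R, hBR, hR⟩ : ∃ R, B' / R < ε / 3 ∧ 0 < R :=
    (((tendsto_const_nhds.div_atTop tendsto_id).eventually (gt_mem_nhds (by positivity))).and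
      (eventually_gt_atTop 0)).exists
  have hclamp := Metric.tendsto_nhds.1 (tendsto_integral_clamp hμ hf hR.le) (ε / 3) (by positivity)
  filter_upwards [hmem, hB, hclamp] with i hmemi hBi hclampi
  have hi : |∫ x, f x ∂(μ i : Measure Ω) - ∫ x, max (-R) (min R (f x)) ∂(μ i : Measure Ω)|
      ≤ B' / R := (abs_integral_sub_integral_clamp_le hmemi hR).trans <| by
    gcongr; exact hBi.trans (le_max_left _ _)
  have h₀ : |∫ x, f x ∂(μ₀ : Measure Ω) - ∫ x, max (-R) (min R (f x)) ∂(μ₀ : Measure Ω)|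
      ≤ B' / R := (abs_integral_sub_integral_clamp_le hmem₀ hR).trans <| by
    gcongr; exact le_max_right _ _
  rw [Real.dist_eq, abs_lt] at *
  rw [abs_le] at hi h₀
  constructor <;> linarith

end WeakConvergence

section ExponentialMoments
open ProbabilityTheory

variable {ι Ω : Type*} [Fintype ι]

lemma exp_mul_norm_le_one_add_sum (a : ℝ) (x : ι → ℝ) :
    Real.exp (a * ‖x‖) ≤ 1 + ∑ j, (Real.exp (a * x j) + Real.exp (-a * x j)) := by
  rcases isEmpty_or_nonempty ι with _ | _
  · simp [Subsingleton.elim x 0]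
  obtain ⟨j, hj⟩ : ∃ j, ‖x‖ = ‖x j‖ := by
    obtain ⟨j, hj⟩ := Finite.exists_max fun j ↦ ‖x j‖
    exact ⟨j, le_antisymm ((pi_norm_le_iff_of_nonneg (norm_nonneg _)).2 hj) (norm_le_pi_norm x j)⟩
  calc Real.exp (a * ‖x‖) ≤ Real.exp |a * x j| := by
        rw [abs_mul, hj, Real.norm_eq_abs]; gcongr; exact le_abs_self a
    _ ≤ Real.exp (a * x j) + Real.exp (-a * x j) := by
        simpa only [neg_mul] using Real.exp_abs_le (a * x j)
    _ ≤ ∑ j, (Real.exp (a * x j) + Real.exp (-a * x j)) :=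
        Finset.single_le_sum (f := fun j ↦ Real.exp (a * x j) + Real.exp (-a * x j))
          (fun _ _ ↦ by positivity) (Finset.mem_univ j)
    _ ≤ _ := by linarith

lemma exists_abs_le_mul_exp_norm_of_abs_le_mul_pow {E : Type*} [SeminormedAddCommGroup E]
    {f : E → ℝ} {C : ℝ} {k : ℕ} (hf : ∀ x, |f x| ≤ C * (1 + ‖x‖) ^ k) :
    ∃ C a : ℝ, ∀ x, |f x| ≤ C * Real.exp (a * ‖x‖) := by
  have hC : 0 ≤ C := by simpa using (abs_nonneg _).trans (hf 0)
  refine ⟨C * (k.factorial * Real.exp 1), 1, fun x ↦ (hf x).trans ?_⟩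
  have hpow := Real.pow_div_factorial_le_exp (1 + ‖x‖) (by positivity) k
  rw [div_le_iff₀ (by positivity), Real.exp_add] at hpow
  rw [one_mul, mul_assoc]
  gcongr
  linarith

variable [MeasurableSpace Ω] {ν : Measure Ω} {X : Ω → ι → ℝ} {f : (ι → ℝ) → ℝ} {C a : ℝ}

lemma sq_le_of_abs_le_mul_exp_norm (hfC : ∀ x, |f x| ≤ C * Real.exp (a * ‖x‖)) (x : ι → ℝ) :
    f x ^ 2 ≤ C ^ 2 *
      (1 + ∑ j, (Real.exp (2 * a * x j) + Real.exp (-(2 * a) * x j))) :=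
  calc f x ^ 2 = |f x| ^ 2 := (sq_abs _).symm
    _ ≤ (C * Real.exp (a * ‖x‖)) ^ 2 := by gcongr; exact hfC x
    _ = C ^ 2 * Real.exp (2 * a * ‖x‖) := by
        rw [mul_pow, ← Real.exp_nat_mul]; push_cast; ring_nf
    _ ≤ _ := by gcongr; exact exp_mul_norm_le_one_add_sum (2 * a) x

lemma integrable_one_add_sum_exp [IsFiniteMeasure ν]
    (hexp : ∀ j σ, Integrable (fun ω ↦ Real.exp (σ * X ω j)) ν) (b : ℝ) :
    Integrable (fun ω ↦ 1 + ∑ j, (Real.exp (b * X ω j) + Real.exp (-b * X ω j))) ν :=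
  (integrable_const 1).add (integrable_finsetSum _ fun j _ ↦ (hexp j _).add (hexp j _))

lemma integral_one_add_sum_exp [IsProbabilityMeasure ν]
    (hexp : ∀ j σ, Integrable (fun ω ↦ Real.exp (σ * X ω j)) ν) (b : ℝ) :
    ∫ ω, 1 + ∑ j, (Real.exp (b * X ω j) + Real.exp (-b * X ω j)) ∂ν =
      1 + ∑ j, (mgf (X · j) ν b + mgf (X · j) ν (-b)) := by
  have hpair (j : ι) : Integrable (fun ω ↦ Real.exp (b * X ω j) + Real.exp (-b * X ω j)) ν :=
    (hexp j b).add (hexp j (-b))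
  rw [integral_add (integrable_const 1) (integrable_finsetSum _ fun j _ ↦ hpair j),
    integral_finsetSum _ fun j _ ↦ hpair j]
  simp only [integral_const, probReal_univ, smul_eq_mul, mul_one,
    integral_add (hexp _ _) (hexp _ _), mgf]

lemma memLp_two_of_abs_le_mul_exp_norm [IsFiniteMeasure ν] (hX : AEMeasurable X ν)
    (hexp : ∀ j σ, Integrable (fun ω ↦ Real.exp (σ * X ω j)) ν)
    (hf : Continuous f) (hfC : ∀ x, |f x| ≤ C * Real.exp (a * ‖x‖)) :
    MemLp (fun ω ↦ f (X ω)) 2 ν := by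
  have hmeas : AEStronglyMeasurable (fun ω ↦ f (X ω)) ν :=
    (hf.measurable.comp_aemeasurable hX).aestronglyMeasurable
  refine (memLp_two_iff_integrable_sq hmeas).2 <|
    ((integrable_one_add_sum_exp hexp (2 * a)).const_mul (C ^ 2)).mono' (hmeas.pow 2)
      (.of_forall fun ω ↦ ?_)
  rw [Real.norm_of_nonneg (sq_nonneg _)]
  exact sq_le_of_abs_le_mul_exp_norm hfC (X ω)

lemma integral_sq_le_of_abs_le_mul_exp_norm [IsProbabilityMeasure ν]
    (hexp : ∀ j σ, Integrable (fun ω ↦ Real.exp (σ * X ω j)) ν)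
    (hfC : ∀ x, |f x| ≤ C * Real.exp (a * ‖x‖)) :
    ∫ ω, f (X ω) ^ 2 ∂ν ≤ C ^ 2 *
      (1 + ∑ j, (mgf (X · j) ν (2 * a) + mgf (X · j) ν (-(2 * a)))) := by
  rw [← integral_one_add_sum_exp hexp, ← integral_const_mul]
  exact integral_mono_of_nonneg (.of_forall fun _ ↦ sq_nonneg _)
    ((integrable_one_add_sum_exp hexp (2 * a)).const_mul _)
    (.of_forall fun ω ↦ sq_le_of_abs_le_mul_exp_norm hfC (X ω))

end ExponentialMoments

section LevyContinuity
open ProbabilityTheory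

lemma tendsto_of_tendsto_charFun_of_isCountablyGenerated {E κ : Type*} [NormedAddCommGroup E]
    [InnerProductSpace ℝ E] [FiniteDimensional ℝ E] [MeasurableSpace E] [BorelSpace E]
    {l : Filter κ} [l.IsCountablyGenerated] {μ : κ → ProbabilityMeasure E}
    {μ₀ : ProbabilityMeasure E}
    (h : ∀ ξ, Tendsto (fun i ↦ charFun (μ i : Measure E) ξ) l
      (nhds (charFun (μ₀ : Measure E) ξ))) :
    Tendsto μ l (nhds μ₀) :=
  tendsto_of_seq_tendsto fun _ hu ↦
    ProbabilityMeasure.tendsto_of_tendsto_charFun fun ξ ↦ (h ξ).comp hu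

variable {ι κ : Type*} [Fintype ι] {l : Filter κ} [l.IsCountablyGenerated]
  {μ : κ → ProbabilityMeasure (EuclideanSpace ℝ ι)} {μ₀ : ProbabilityMeasure (EuclideanSpace ℝ ι)}

theorem tendsto_integral_of_tendsto_charFun_of_isBoundedUnder_mgf
    (hchar : ∀ ξ, Tendsto (fun i ↦ charFun (μ i : Measure (EuclideanSpace ℝ ι)) ξ) l
      (nhds (charFun (μ₀ : Measure (EuclideanSpace ℝ ι)) ξ)))
    (hexp : ∀ i j σ, Integrable (fun x : EuclideanSpace ℝ ι ↦ Real.exp (σ * x j)) (μ i : Measure _))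
    (hexp₀ : ∀ j σ, Integrable (fun x : EuclideanSpace ℝ ι ↦ Real.exp (σ * x j)) (μ₀ : Measure _))
    (hmgf : ∀ j σ, l.IsBoundedUnder (· ≤ ·) fun i ↦
      mgf (fun x : EuclideanSpace ℝ ι ↦ x j) (μ i : Measure _) σ)
    {f : (ι → ℝ) → ℝ} (hf : Continuous f) {C a : ℝ}
    (hfC : ∀ x, |f x| ≤ C * Real.exp (a * ‖x‖)) :
    Tendsto (fun i ↦ ∫ x, f (WithLp.ofLp x) ∂(μ i : Measure (EuclideanSpace ℝ ι))) l
      (nhds (∫ x, f (WithLp.ofLp x) ∂(μ₀ : Measure (EuclideanSpace ℝ ι)))) := by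
  choose B hB using fun j σ ↦ (hmgf j σ).eventually_le
  have hmem {ν : ProbabilityMeasure (EuclideanSpace ℝ ι)}
      (hν : ∀ j σ, Integrable (fun x : EuclideanSpace ℝ ι ↦ Real.exp (σ * x j)) (ν : Measure _)) :
      MemLp (fun x ↦ f (WithLp.ofLp x)) 2 (ν : Measure (EuclideanSpace ℝ ι)) :=
    memLp_two_of_abs_le_mul_exp_norm (by fun_prop) hν hf hfC
  refine tendsto_integral_of_integral_sq_le
    (tendsto_of_tendsto_charFun_of_isCountablyGenerated hchar) (by fun_prop)
    (.of_forall fun i ↦ hmem (hexp i)) (hmem hexp₀)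
    (B := C ^ 2 * (1 + ∑ j, (B j (2 * a) + B j (-(2 * a))))) ?_
  filter_upwards [eventually_all.2 fun j ↦ hB j (2 * a), eventually_all.2 fun j ↦ hB j (-(2 * a))]
    with i hpos hneg
  refine (integral_sq_le_of_abs_le_mul_exp_norm (X := WithLp.ofLp) (hexp i) hfC).trans ?_
  gcongr with j
  exacts [hpos j, hneg j]

end LevyContinuity
section ProductDensity

theorem pi_withDensity_ofReal {ι : Type*} [Fintype ι] {E : ι → Type*}
    [∀ i, MeasurableSpace (E i)] (μ : ∀ i, Measure (E i)) [∀ i, SigmaFinite (μ i)]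
    {g : ∀ i, E i → ℝ} (hg : ∀ i, Integrable (g i) (μ i)) (hg₀ : ∀ i x, 0 ≤ g i x) :
    Measure.pi (fun i ↦ (μ i).withDensity fun x ↦ ENNReal.ofReal (g i x)) =
      (Measure.pi μ).withDensity fun x ↦ ENNReal.ofReal (∏ i, g i (x i)) := by
  refine Measure.pi_eq fun s hs ↦ ?_
  have hint : Integrable (fun x ↦ ∏ i, g i (x i)) (Measure.pi fun i ↦ (μ i).restrict (s i)) :=
    .fintype_prod_dep fun i ↦ (hg i).integrableOn
  rw [withDensity_apply _ (.univ_pi hs), Measure.restrict_pi_pi,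
    ← ofReal_integral_eq_lintegral_ofReal hint
      (.of_forall fun x ↦ Finset.prod_nonneg fun i _ ↦ hg₀ i (x i)),
    integral_fintype_prod_eq_prod,
    ENNReal.ofReal_prod_of_nonneg fun i _ ↦ integral_nonneg (hg₀ i)]
  refine Finset.prod_congr rfl fun i _ ↦ ?_
  rw [withDensity_apply _ (hs i), ofReal_integral_eq_lintegral_ofReal (hg i).integrableOn
    (.of_forall (hg₀ i))]

lemma map_withDensity_comp {α β : Type*} [MeasurableSpace α] [MeasurableSpace β] (μ : Measure α)
    {T : α → β} (hT : Measurable T) {g : β → ENNReal} (hg : Measurable g) :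
    (μ.withDensity (g ∘ T)).map T = (μ.map T).withDensity g := by
  ext s hs
  rw [Measure.map_apply hT hs, withDensity_apply _ (hT hs), withDensity_apply _ hs,
    setLIntegral_map hs hg hT]
  rfl

end ProductDensity

section GaussianDensity
open ProbabilityTheory
open scoped Matrix

variable {ι : Type*} [Fintype ι]

lemma prod_gaussianPDFReal_zero_one (x : ι → ℝ) :
    ∏ i, gaussianPDFReal 0 1 (x i) =
      (2 * Real.pi) ^ (-(Fintype.card ι : ℝ) / 2) * Real.exp (-(1 / 2) * (x ⬝ᵥ x)) := by
  have hconst : ∏ _i : ι, (√(2 * Real.pi))⁻¹ = (2 * Real.pi) ^ (-(Fintype.card ι : ℝ) / 2) := by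
    rw [Finset.prod_const, Finset.card_univ, Real.sqrt_eq_rpow, ← Real.rpow_neg (by positivity),
      ← Real.rpow_mul_natCast (by positivity)]
    ring_nf
  simp only [gaussianPDFReal, NNReal.coe_one, mul_one, sub_zero, Finset.prod_mul_distrib, hconst,
    ← Real.exp_sum, dotProduct, Finset.mul_sum]
  ring_nf

variable [DecidableEq ι]

/-- The density of the nondegenerate Gaussian measure with mean `m` and covariance matrix `S` with
respect to Lebesgue measure, meaningful only for positive definite `S`. -/
noncomputable def multivariateGaussianPDFReal (m : EuclideanSpace ℝ ι) (S : Matrix ι ι ℝ)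
    (x : EuclideanSpace ℝ ι) : ℝ :=
  (2 * Real.pi) ^ (-(Fintype.card ι : ℝ) / 2) * (√S.det)⁻¹ *
    Real.exp (-(1 / 2) * ((x - m).ofLp ⬝ᵥ S⁻¹ *ᵥ (x - m).ofLp))

lemma multivariateGaussianPDFReal_nonneg (m : EuclideanSpace ℝ ι) (S : Matrix ι ι ℝ)
    (x : EuclideanSpace ℝ ι) : 0 ≤ multivariateGaussianPDFReal m S x := by
  rw [multivariateGaussianPDFReal]
  positivity

@[fun_prop]
lemma measurable_multivariateGaussianPDFReal (m : EuclideanSpace ℝ ι) (S : Matrix ι ι ℝ) :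
    Measurable (multivariateGaussianPDFReal m S) := by
  unfold multivariateGaussianPDFReal
  exact Continuous.measurable (by fun_prop)

theorem stdGaussian_eq_withDensity :
    stdGaussian (EuclideanSpace ℝ ι) =
      volume.withDensity fun x ↦ ENNReal.ofReal (multivariateGaussianPDFReal 0 1 x) := by
  have hprod (x : ι → ℝ) : ∏ i, gaussianPDFReal 0 1 (x i) =
      multivariateGaussianPDFReal 0 1 (WithLp.toLp 2 x) := by
    simp [prod_gaussianPDFReal_zero_one, multivariateGaussianPDFReal]
  have hpi : Measure.pi (fun _ : ι ↦ gaussianReal 0 1) = volume.withDensity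
      ((fun x ↦ ENNReal.ofReal (multivariateGaussianPDFReal 0 1 x)) ∘ WithLp.toLp 2) := by
    simp only [gaussianReal_of_var_ne_zero 0 one_ne_zero, gaussianPDF_def]
    rw [pi_withDensity_ofReal _ (fun _ ↦ integrable_gaussianPDFReal 0 1)
      (fun _ ↦ gaussianPDFReal_nonneg 0 1), ← volume_pi]
    simp only [hprod, Function.comp_def]
  rw [← map_pi_eq_stdGaussian, hpi, map_withDensity_comp _ (by fun_prop) (by fun_prop),
    (PiLp.volume_preserving_toLp ι).map_eq]

section Sqrt
open scoped MatrixOrder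

lemma det_sqrt_of_posSemidef {S : Matrix ι ι ℝ} (hS : S.PosSemidef) :
    (CFC.sqrt S).det = √S.det := by
  have hsqrt : (CFC.sqrt S).PosSemidef := Matrix.nonneg_iff_posSemidef.1 (CFC.sqrt_nonneg S)
  conv_rhs => rw [← CFC.sqrt_mul_sqrt_self S hS.nonneg, Matrix.det_mul,
    Real.sqrt_mul_self hsqrt.det_nonneg]

lemma sqrt_mulVec_dotProduct_inv_mulVec_sqrt_mulVec {S : Matrix ι ι ℝ} (hS : S.PosDef)
    (x : ι → ℝ) : (CFC.sqrt S *ᵥ x) ⬝ᵥ S⁻¹ *ᵥ (CFC.sqrt S *ᵥ x) = x ⬝ᵥ x := by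
  have hunit : IsUnit (CFC.sqrt S).det := by
    rw [det_sqrt_of_posSemidef hS.posSemidef]
    exact (Real.sqrt_pos.2 hS.det_pos).ne'.isUnit
  have hsymm : (CFC.sqrt S)ᵀ = CFC.sqrt S :=
    Matrix.conjTranspose_eq_transpose_of_trivial (CFC.sqrt S) ▸
      (Matrix.nonneg_iff_posSemidef.1 (CFC.sqrt_nonneg S)).isHermitian
  have hcancel : CFC.sqrt S * (S⁻¹ * CFC.sqrt S) = 1 := by
    conv_lhs => enter [2, 1]; rw [← CFC.sqrt_mul_sqrt_self S hS.posSemidef.nonneg]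
    rw [Matrix.mul_inv_rev, Matrix.mul_assoc, Matrix.nonsing_inv_mul _ hunit, Matrix.mul_one,
      Matrix.mul_nonsing_inv _ hunit]
  rw [dotProduct_comm, Matrix.mulVec_mulVec, Matrix.dotProduct_mulVec, ← Matrix.mulVec_transpose,
    hsymm, Matrix.mulVec_mulVec, hcancel, Matrix.one_mulVec]

lemma multivariateGaussianPDFReal_add_toEuclideanCLM_sqrt (m : EuclideanSpace ℝ ι)
    {S : Matrix ι ι ℝ} (hS : S.PosDef) (x : EuclideanSpace ℝ ι) :
    √S.det * multivariateGaussianPDFReal m S (m + Matrix.toEuclideanCLM (𝕜 := ℝ) (CFC.sqrt S) x) =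
      multivariateGaussianPDFReal 0 1 x := by
  have hdet : √S.det ≠ 0 := (Real.sqrt_pos.2 hS.det_pos).ne'
  simp only [multivariateGaussianPDFReal, add_sub_cancel_left, Matrix.ofLp_toEuclideanCLM,
    sqrt_mulVec_dotProduct_inv_mulVec_sqrt_mulVec hS, Matrix.det_one, Real.sqrt_one, sub_zero,
    inv_one, Matrix.one_mulVec, mul_one]
  field_simp

lemma map_add_toEuclideanCLM_volume (m : EuclideanSpace ℝ ι) {A : Matrix ι ι ℝ} (hA : A.det ≠ 0) :
    (volume : Measure (EuclideanSpace ℝ ι)).map (fun x ↦ m + Matrix.toEuclideanCLM (𝕜 := ℝ) A x) =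
      ENNReal.ofReal |A.det⁻¹| • volume := by
  have hdet : LinearMap.det (Matrix.toEuclideanLin A) = A.det := LinearMap.det_toLpLin 2 A
  have hlin : (volume : Measure (EuclideanSpace ℝ ι)).map (Matrix.toEuclideanCLM (𝕜 := ℝ) A) =
      ENNReal.ofReal |A.det⁻¹| • volume :=
    hdet ▸ Measure.map_linearMap_addHaar_eq_smul_addHaar volume (hdet.trans_ne hA)
  change volume.map ((m + ·) ∘ Matrix.toEuclideanCLM (𝕜 := ℝ) A) = _
  rw [← Measure.map_map (by fun_prop) (by fun_prop), hlin, Measure.map_smul,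
    map_add_left_eq_self]

theorem multivariateGaussian_eq_withDensity (m : EuclideanSpace ℝ ι) {S : Matrix ι ι ℝ}
    (hS : S.PosDef) :
    multivariateGaussian m S =
      volume.withDensity fun x ↦ ENNReal.ofReal (multivariateGaussianPDFReal m S x) := by
  have hdet : 0 < √S.det := Real.sqrt_pos.2 hS.det_pos
  have hstd : stdGaussian (EuclideanSpace ℝ ι) = ENNReal.ofReal √S.det • volume.withDensity
      ((fun x ↦ ENNReal.ofReal (multivariateGaussianPDFReal m S x)) ∘
        fun x ↦ m + Matrix.toEuclideanCLM (𝕜 := ℝ) (CFC.sqrt S) x) := by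
    rw [stdGaussian_eq_withDensity, ← withDensity_smul _ (by fun_prop)]
    congr with x
    simp only [Pi.smul_apply, Function.comp_apply, smul_eq_mul, ← ENNReal.ofReal_mul hdet.le,
      multivariateGaussianPDFReal_add_toEuclideanCLM_sqrt m hS]
  have hsqrt := det_sqrt_of_posSemidef hS.posSemidef
  rw [multivariateGaussian, hstd, Measure.map_smul,
    map_withDensity_comp _ (by fun_prop) (by fun_prop),
    map_add_toEuclideanCLM_volume m (hsqrt ▸ hdet.ne'), withDensity_smul_measure, smul_smul, hsqrt,
    abs_of_pos (inv_pos.2 hdet), ← ENNReal.ofReal_mul hdet.le, mul_inv_cancel₀ hdet.ne',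
    ENNReal.ofReal_one, one_smul]

end Sqrt

theorem integral_multivariateGaussian_zero_eq_integral {S : Matrix ι ι ℝ} (hS : S.PosDef)
    (f : (ι → ℝ) → ℝ) :
    ∫ x, f (WithLp.ofLp x) ∂multivariateGaussian 0 S =
      (2 * Real.pi) ^ (-(Fintype.card ι : ℝ) / 2) * (√S.det)⁻¹ *
        ∫ x : ι → ℝ, f x * Real.exp (-(1 / 2) * (x ⬝ᵥ S⁻¹ *ᵥ x)) := by
  rw [multivariateGaussian_eq_withDensity 0 hS,
    integral_withDensity_eq_integral_toReal_smul (by fun_prop) (by simp),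
    ← (PiLp.volume_preserving_toLp ι).integral_comp (MeasurableEquiv.toLp 2 _).measurableEmbedding,
    ← integral_const_mul]
  simp only [ENNReal.toReal_ofReal (multivariateGaussianPDFReal_nonneg _ _ _)]
  simp only [multivariateGaussianPDFReal, sub_zero, smul_eq_mul]
  congr with x
  ring

lemma integrable_exp_mul_eval_multivariateGaussian (m : EuclideanSpace ℝ ι) {S : Matrix ι ι ℝ}
    (hS : S.PosSemidef) (j : ι) (σ : ℝ) :
    Integrable (fun x : EuclideanSpace ℝ ι ↦ Real.exp (σ * x j)) (multivariateGaussian m S) :=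
  (measurePreserving_eval_multivariateGaussian hS).integrable_comp_of_integrable
    (integrable_exp_mul_gaussianReal σ)

lemma charFun_multivariateGaussian_zero_eq_cexp_sum {S : Matrix ι ι ℝ} (hS : S.PosSemidef)
    (ξ : EuclideanSpace ℝ ι) :
    charFun (multivariateGaussian 0 S) ξ =
      Complex.exp (-(1 / 2) * ∑ i, ∑ j, (S i j : ℂ) * ξ i * ξ j) := by
  rw [charFun_multivariateGaussian hS]
  simp only [inner_zero_right, dotProduct, Matrix.mulVec]
  push_cast
  simp only [Finset.mul_sum, Finset.sum_div, zero_mul, zero_sub, ← Finset.sum_neg_distrib]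
  refine congrArg _ (Finset.sum_congr rfl fun i _ ↦ Finset.sum_congr rfl fun j _ ↦ ?_)
  ring

end GaussianDensity

section LatticeMeasure
open ProbabilityTheory

variable {ι : Type*} {w : (ι → ℤ) → ℝ}

/-- The law of the rescaled lattice point `x / r` when `x ∈ ℤ^ι` carries the weight `w x`. It turns
the sums of the theorem into integrals. Negative weights are truncated to `0`. -/
noncomputable def latticeMeasure (w : (ι → ℤ) → ℝ) (r : ℝ) : Measure (EuclideanSpace ℝ ι) :=
  .sum fun x ↦ ENNReal.ofReal (w x) • .dirac (WithLp.toLp 2 fun i ↦ x i / r)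

lemma isProbabilityMeasure_latticeMeasure (hw : ∀ x, 0 ≤ w x) (hw₁ : HasSum w 1) (r : ℝ) :
    IsProbabilityMeasure (latticeMeasure w r) where
  measure_univ := by
    simp only [latticeMeasure, Measure.sum_apply _ .univ, Measure.smul_apply, measure_univ,
      smul_eq_mul, mul_one]
    rw [← ENNReal.ofReal_tsum_of_nonneg hw hw₁.summable, hw₁.tsum_eq, ENNReal.ofReal_one]

section Finite

variable [Finite ι]

lemma integral_latticeMeasure {F : Type*} [NormedAddCommGroup F] [NormedSpace ℝ F]
    [FiniteDimensional ℝ F] (hw : ∀ x, 0 ≤ w x) (r : ℝ) (g : EuclideanSpace ℝ ι → F) :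
    ∫ y, g y ∂latticeMeasure w r = ∑' x : ι → ℤ, w x • g (WithLp.toLp 2 fun i ↦ x i / r) := by
  rw [latticeMeasure, integral_sum_dirac (by simp)]
  simp only [ENNReal.toReal_ofReal (hw _)]

lemma integrable_latticeMeasure_iff {F : Type*} [NormedAddCommGroup F]
    (hw : ∀ x, 0 ≤ w x) (r : ℝ) (g : EuclideanSpace ℝ ι → F) :
    Integrable g (latticeMeasure w r) ↔
      Summable fun x : ι → ℤ ↦ w x * ‖g (WithLp.toLp 2 fun i ↦ x i / r)‖ := by
  rw [latticeMeasure, integrable_sum_dirac_iff (by simp)]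
  simp only [ENNReal.toReal_ofReal (hw _)]

lemma integrable_exp_mul_eval_latticeMeasure (hw : ∀ x, 0 ≤ w x)
    (hexp : ∀ j σ, Summable fun x : ι → ℤ ↦ Real.exp (σ * x j) * w x) (r : ℝ) (j : ι) (σ : ℝ) :
    Integrable (fun y : EuclideanSpace ℝ ι ↦ Real.exp (σ * y j)) (latticeMeasure w r) := by
  refine (integrable_latticeMeasure_iff hw r _).2 ((hexp j (σ / r)).congr fun x ↦ ?_)
  rw [Real.norm_of_nonneg (Real.exp_nonneg _), mul_comm, div_mul_eq_mul_div, ← mul_div_assoc]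

end Finite

variable [Fintype ι]

/-- The characteristic function of a weight `w` on `ℤ^ι` at a complex frequency `z`, written
`M_t(z)` in `stmt_12` for `w = p_t`. -/
noncomputable def latticeCharFun (w : (ι → ℤ) → ℝ) (z : ι → ℂ) : ℂ :=
  ∑' x : ι → ℤ, Complex.exp (Complex.I * ∑ j, z j * (x j : ℂ)) * (w x : ℂ)

lemma latticeCharFun_div (w : (ι → ℤ) → ℝ) (N : ℝ) (z : ι → ℂ) :
    latticeCharFun (fun x ↦ w x / N) z = latticeCharFun w z / N := by
  simp only [latticeCharFun, ← tsum_div_const, Complex.ofReal_div, mul_div_assoc]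

lemma charFun_latticeMeasure (hw : ∀ x, 0 ≤ w x) (r : ℝ) (ξ : EuclideanSpace ℝ ι) :
    charFun (latticeMeasure w r) ξ = latticeCharFun w fun j ↦ (ξ j : ℂ) / r := by
  rw [charFun_apply, integral_latticeMeasure hw, latticeCharFun]
  refine tsum_congr fun x ↦ ?_
  rw [Complex.real_smul, mul_comm, mul_comm Complex.I, PiLp.inner_apply]
  push_cast
  congr! 4 with j
  rw [RCLike.inner_apply, conj_trivial]
  push_cast
  ring

lemma mgf_eval_latticeMeasure [DecidableEq ι] (hw : ∀ x, 0 ≤ w x) (r : ℝ) (j : ι) (σ : ℝ) :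
    (mgf (fun y : EuclideanSpace ℝ ι ↦ y j) (latticeMeasure w r) σ : ℂ) =
      latticeCharFun w fun i ↦ (Pi.single j (-σ * Complex.I) : ι → ℂ) i / r := by
  have hsum (x : ι → ℤ) :
      Complex.I * ∑ i, (Pi.single j (-σ * Complex.I) : ι → ℂ) i / r * (x i : ℂ) =
        σ * (x j / r) := by
    rw [Finset.sum_eq_single j (fun i _ hij ↦ by simp [Pi.single_eq_of_ne hij]) (by simp),
      Pi.single_eq_same]
    linear_combination (-σ * (x j / r) : ℂ) * Complex.I_mul_I
  rw [mgf, integral_latticeMeasure hw, Complex.ofReal_tsum, latticeCharFun]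
  refine tsum_congr fun x ↦ ?_
  rw [hsum, smul_eq_mul, mul_comm]
  push_cast
  rfl

end LatticeMeasure

section LatticeLimit
open ProbabilityTheory

variable {ι κ : Type*} [Fintype ι] [DecidableEq ι] {S : Matrix ι ι ℝ} {l : Filter κ}
  [l.IsCountablyGenerated] {w : κ → (ι → ℤ) → ℝ} {r : κ → ℝ} {f : (ι → ℝ) → ℝ} {C a : ℝ}

lemma tendsto_tsum_of_tendsto_latticeCharFun_of_hasSum_one (hS : S.PosDef)
    (hw : ∀ i x, 0 ≤ w i x) (hw₁ : ∀ i, HasSum (w i) 1)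
    (hexp : ∀ i j σ, Summable fun x : ι → ℤ ↦ Real.exp (σ * x j) * w i x)
    (hchar : ∀ z : ι → ℂ, Tendsto (fun i ↦ latticeCharFun (w i) fun j ↦ z j / r i) l
      (nhds (Complex.exp (-(1 / 2) * ∑ i, ∑ j, (S i j : ℂ) * z i * z j))))
    (hf : Continuous f) (hfC : ∀ x, |f x| ≤ C * Real.exp (a * ‖x‖)) :
    Tendsto (fun i ↦ ∑' x : ι → ℤ, f (fun j ↦ x j / r i) * w i x) l
      (nhds (∫ x, f (WithLp.ofLp x) ∂multivariateGaussian 0 S)) := by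
  let μ (i : κ) : ProbabilityMeasure (EuclideanSpace ℝ ι) :=
    ⟨latticeMeasure (w i) (r i), isProbabilityMeasure_latticeMeasure (hw i) (hw₁ i) (r i)⟩
  let μ₀ : ProbabilityMeasure (EuclideanSpace ℝ ι) := ⟨multivariateGaussian 0 S, inferInstance⟩
  have hcharμ (ξ : EuclideanSpace ℝ ι) :
      Tendsto (fun i ↦ charFun (μ i : Measure (EuclideanSpace ℝ ι)) ξ) l
        (nhds (charFun (μ₀ : Measure (EuclideanSpace ℝ ι)) ξ)) := by
    change Tendsto (fun i ↦ charFun (latticeMeasure (w i) (r i)) ξ) l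
      (nhds (charFun (multivariateGaussian 0 S) ξ))
    simp only [charFun_latticeMeasure (hw _),
      charFun_multivariateGaussian_zero_eq_cexp_sum hS.posSemidef]
    exact hchar fun j ↦ ξ j
  have hmgf (j : ι) (σ : ℝ) : l.IsBoundedUnder (· ≤ ·) fun i ↦
      mgf (fun y : EuclideanSpace ℝ ι ↦ y j) (latticeMeasure (w i) (r i)) σ := by
    have hlim := (Complex.continuous_re.tendsto _).comp (hchar (Pi.single j (-σ * Complex.I)))
    simp only [← mgf_eval_latticeMeasure (hw _), Function.comp_def, Complex.ofReal_re] at hlim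
    exact hlim.isBoundedUnder_le
  have hlim := tendsto_integral_of_tendsto_charFun_of_isBoundedUnder_mgf hcharμ
    (fun i ↦ integrable_exp_mul_eval_latticeMeasure (hw i) (hexp i) (r i))
    (integrable_exp_mul_eval_multivariateGaussian 0 hS.posSemidef) hmgf hf hfC
  refine hlim.congr fun i ↦ ?_
  simp only [μ, ProbabilityMeasure.coe_mk, integral_latticeMeasure (hw i), smul_eq_mul, mul_comm]

theorem tendsto_tsum_of_tendsto_latticeCharFun (hS : S.PosDef) {N : ℝ}
    (hw : ∀ i x, 0 ≤ w i x) (hwN : ∀ i, HasSum (w i) N)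
    (hexp : ∀ i j σ, Summable fun x : ι → ℤ ↦ Real.exp (σ * x j) * w i x)
    (hchar : ∀ z : ι → ℂ, Tendsto (fun i ↦ latticeCharFun (w i) fun j ↦ z j / r i) l
      (nhds (N * Complex.exp (-(1 / 2) * ∑ i, ∑ j, (S i j : ℂ) * z i * z j))))
    (hf : Continuous f) (hfC : ∀ x, |f x| ≤ C * Real.exp (a * ‖x‖)) :
    Tendsto (fun i ↦ ∑' x : ι → ℤ, f (fun j ↦ x j / r i) * w i x) l
      (nhds (N * ∫ x, f (WithLp.ofLp x) ∂multivariateGaussian 0 S)) := by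
  rcases eq_or_ne N 0 with rfl | hN
  · have hzero (i : κ) : w i = 0 := (hasSum_zero_iff_of_nonneg (hw i)).1 (hwN i)
    simpa [hzero] using tendsto_const_nhds
  have hnormalized := tendsto_tsum_of_tendsto_latticeCharFun_of_hasSum_one (r := r) hS
    (w := fun i x ↦ w i x / N)
    (fun i x ↦ div_nonneg (hw i x) ((hwN i).nonneg (hw i)))
    (fun i ↦ div_self hN ▸ (hwN i).div_const N)
    (fun i j σ ↦ by simpa only [mul_div_assoc] using (hexp i j σ).div_const N)
    (fun z ↦ by
      simpa only [latticeCharFun_div, mul_div_cancel_left₀ _ (Complex.ofReal_ne_zero.2 hN)]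
        using (hchar z).div_const (N : ℂ)) hf hfC
  refine (hnormalized.const_mul N).congr fun i ↦ ?_
  rw [← tsum_mul_left]
  refine tsum_congr fun x ↦ ?_
  field_simp

end LatticeLimit

section NormOne

variable {d : ℕ}

lemma abs_apply_le_normOne (x : Fin d → ℤ) (j : Fin d) : |(x j : ℝ)| ≤ normOne x :=
  Finset.single_le_sum (f := fun i ↦ |(x i : ℝ)|) (fun _ _ ↦ abs_nonneg _) (Finset.mem_univ j)

lemma summable_exp_mul_apply_of_summable_exp_mul_normOne {w : (Fin d → ℤ) → ℝ}
    (hw : ∀ x, 0 ≤ w x)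
    (hexp : ∀ lam : ℝ, 0 ≤ lam → Summable fun x ↦ Real.exp (lam * normOne x) * w x)
    (j : Fin d) (σ : ℝ) : Summable fun x : Fin d → ℤ ↦ Real.exp (σ * x j) * w x := by
  refine (hexp |σ| (abs_nonneg σ)).of_nonneg_of_le
    (fun x ↦ mul_nonneg (Real.exp_nonneg _) (hw x)) fun x ↦ ?_
  refine mul_le_mul_of_nonneg_right (Real.exp_le_exp.2 ?_) (hw x)
  calc σ * x j ≤ |σ * x j| := le_abs_self _
    _ = |σ| * |(x j : ℝ)| := abs_mul _ _
    _ ≤ |σ| * normOne x := by gcongr; exact abs_apply_le_normOne x j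

end NormOne

theorem stmt_12_general {d : ℕ} (D : Matrix (Fin d) (Fin d) ℝ) (hDpos : D.PosDef) (N : ℝ)
    (p : ℝ → (Fin d → ℤ) → ℝ)
    (hp0 : ∀ t : ℝ, 0 < t → ∀ x, 0 ≤ p t x)
    (hpN : ∀ t : ℝ, 0 < t → HasSum (p t) N)
    (hpexp : ∀ t : ℝ, 0 < t → ∀ lam : ℝ, 0 ≤ lam →
      Summable (fun x : Fin d → ℤ ↦ Real.exp (lam * normOne x) * p t x))
    (hconv : ∀ z : Fin d → ℂ,
      Tendsto (fun t : ℝ ↦ latticeCharFun (p t) fun i ↦ z i / (Real.sqrt t : ℂ)) atTop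
        (nhds (N * Complex.exp (-(1 / 2) * ∑ i, ∑ j, (D i j : ℂ) * z i * z j))))
    (f : (Fin d → ℝ) → ℝ) (hf : Continuous f)
    (hfexp : ∃ C a : ℝ, ∀ x : Fin d → ℝ, |f x| ≤ C * Real.exp (a * ‖x‖)) :
    Tendsto (fun t : ℝ ↦ ∑' x : Fin d → ℤ, f (fun i ↦ (x i : ℝ) / Real.sqrt t) * p t x) atTop
      (nhds (N * (2 * Real.pi) ^ (-(d : ℝ) / 2) * (Real.sqrt D.det)⁻¹ *
        ∫ x : Fin d → ℝ,
          f x * Real.exp (-(1 / 2) * ∑ i, x i * Matrix.mulVec D⁻¹ x i))) := by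
  obtain ⟨C, a, hfC⟩ := hfexp
  have hlim := tendsto_tsum_of_tendsto_latticeCharFun (l := atTop)
    (w := fun t : Set.Ioi (0 : ℝ) ↦ p t) (r := fun t ↦ √t) hDpos
    (fun t ↦ hp0 t t.2) (fun t ↦ hpN t t.2)
    (fun t ↦ summable_exp_mul_apply_of_summable_exp_mul_normOne (hp0 t t.2) (hpexp t t.2))
    (fun z ↦ tendsto_comp_val_Ioi_atTop.2 (hconv z)) hf hfC
  rw [integral_multivariateGaussian_zero_eq_integral hDpos f, Fintype.card_fin, ← mul_assoc,
    ← mul_assoc] at hlim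
  exact tendsto_comp_val_Ioi_atTop.1 hlim

/-- Central limit theorem for position averages: if the diffusively rescaled
characteristic functions `M_t(z/√t)` converge to `N e^{−½ z·Dz}` uniformly on compact subsets of
`ℂᵈ`, then for every polynomially bounded continuous `f`,
`∑_x f(x/√t) p_t(x) → N (2π)^{−d/2} (det D)^{−1/2} ∫ f(x) e^{−½⟨x,D⁻¹x⟩} dx`. -/
theorem stmt_12 {d : ℕ} (hd : 1 ≤ d)
    (D : Matrix (Fin d) (Fin d) ℝ) (hDsymm : D.IsSymm) (hDpos : D.PosDef)
    (N : ℝ) (hN : 0 ≤ N)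
    (p : ℝ → (Fin d → ℤ) → ℝ)
    (hp0 : ∀ t : ℝ, 0 < t → ∀ x, 0 ≤ p t x)
    (hpN : ∀ t : ℝ, 0 < t → HasSum (p t) N)
    (hpexp : ∀ t : ℝ, 0 < t → ∀ lam : ℝ, 0 ≤ lam →
      Summable (fun x : Fin d → ℤ => Real.exp (lam * normOne x) * p t x))
    (M : ℝ → (Fin d → ℂ) → ℂ)
    (hM : ∀ (t : ℝ) (z : Fin d → ℂ),
      M t z = ∑' x : Fin d → ℤ,
        Complex.exp (Complex.I * ∑ j, z j * (x j : ℂ)) * (p t x : ℂ))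
    (hconv : ∀ K : Set (Fin d → ℂ), IsCompact K →
      TendstoUniformlyOn
        (fun (t : ℝ) (z : Fin d → ℂ) => M t (fun i => z i / (Real.sqrt t : ℂ)))
        (fun z : Fin d → ℂ =>
          (N : ℂ) * Complex.exp (-(1 / 2) * ∑ i, ∑ j, (D i j : ℂ) * z i * z j))
        atTop K)
    (f : (Fin d → ℝ) → ℝ) (hf : Continuous f)
    (hfpoly : ∃ (C : ℝ) (k : ℕ), ∀ x : Fin d → ℝ, |f x| ≤ C * (1 + ‖x‖) ^ k) :
    Tendsto
      (fun t : ℝ => ∑' x : Fin d → ℤ, f (fun i => (x i : ℝ) / Real.sqrt t) * p t x)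
      atTop
      (nhds (N * (2 * Real.pi) ^ (-(d : ℝ) / 2) * (Real.sqrt D.det)⁻¹ *
        ∫ x : Fin d → ℝ,
          f x * Real.exp (-(1 / 2) * ∑ i, x i * Matrix.mulVec D⁻¹ x i))) := by
  obtain ⟨C, k, hfk⟩ := hfpoly
  obtain rfl : M = fun t ↦ latticeCharFun (p t) := funext₂ hM
  exact stmt_12_general D hDpos N p hp0 hpN hpexp
    (fun z ↦ (hconv {z} isCompact_singleton).tendsto_at rfl) f hf
    (exists_abs_le_mul_exp_norm_of_abs_le_mul_pow hfk)
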